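/- Let G be a simple 2-connected outerplanar graph with k chords, equipped with an r-acyclic orientation, and for i ≥ 2 let s_i be the number of sinks of (undirected) degree i. Then Σ_{i≥2} (i−1)·s_i ≤ k + 1. -/

import Mathlib

/-- `D` is an orientation of the simple graph `G`: every arc of `D` is along an edge of
`G`, and every edge of `G` is directed in exactly one of its two directions. -/
def IsOrientOf {V : Type*} (G : SimpleGraph V) (D : V → V → Prop) : Prop :=
  (∀ u v, D u v → G.Adj u v) ∧ ∀ u v, G.Adj u v → (D u v ↔ ¬ D v u)

/-- `p` is an edge of the outer Hamiltonian cycle `0 − 1 − ⋯ − (n-1) − 0` of `Fin n`. -/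
def IsCycEdge (n : ℕ) [NeZero n] (p : Sym2 (Fin n)) : Prop :=
  ∃ u : Fin n, p = s(u, u + 1)

/-- `{u, v}` is a chord of `G`: an edge that is not an outer-cycle edge. -/
def IsChord {n : ℕ} [NeZero n] (G : SimpleGraph (Fin n)) (u v : Fin n) : Prop :=
  G.Adj u v ∧ ¬ IsCycEdge n s(u, v)

/-- `G` is a 2-connected outerplanar graph presented with its vertices `0, 1, …, n-1`
in order along the outer Hamiltonian cycle: `G` contains all outer-cycle edges, and its
chords are pairwise noncrossing. -/
def OuterHam (n : ℕ) [NeZero n] (G : SimpleGraph (Fin n)) : Prop :=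
  (∀ u : Fin n, G.Adj u (u + 1)) ∧
  ∀ a b c d : Fin n, IsChord G a b → IsChord G c d →
    ¬ (a.val < c.val ∧ c.val < b.val ∧ b.val < d.val)

/-- The set of chords of `G` (as unordered edges). -/
def chordSet (n : ℕ) [NeZero n] (G : SimpleGraph (Fin n)) : Set (Sym2 (Fin n)) :=
  {p | p ∈ G.edgeSet ∧ ¬ IsCycEdge n p}

/-- Let `G` be a simple 2-connected outerplanar graph with `k` chords,
equipped with an `r`-acyclic orientation `D`, and for each `i` let `s_i` be the number
of sinks of (undirected) degree `i`. Then `∑_{i≥2} (i − 1) · s_i ≤ k + 1`. (Degrees in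
`G` are at most `n - 1 < n + 1`, so the sum below captures all sinks.) -/
theorem stmt_13 {n : ℕ} [NeZero n] (hn : 3 ≤ n) (G : SimpleGraph (Fin n))
    [DecidableRel G.Adj] (hG : OuterHam n G) (D : Fin n → Fin n → Prop)
    (hO : IsOrientOf G D)
    (hacyc : ∀ v, ¬ Relation.TransGen D v v) (r : Fin n)
    (hroot : (∀ u, ¬ D u r) ∧ ∀ v, (∀ u, ¬ D u v) → v = r) :
    ∑ i ∈ Finset.range (n + 1),
        (i - 1) * {v : Fin n | (∀ u, ¬ D v u) ∧ G.degree v = i}.ncard ≤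
      (chordSet n G).ncard + 1 := by
  classical
  obtain ⟨hO1, hO2⟩ := hO
  let indeg : Fin n → ℕ := fun v => (Finset.univ.filter (fun u => D u v)).card
  -- the left side is a sum over sinks
  have h1 : ∑ i ∈ Finset.range (n + 1),
        (i - 1) * {v : Fin n | (∀ u, ¬ D v u) ∧ G.degree v = i}.ncard
      = ∑ v ∈ Finset.univ.filter (fun v : Fin n => ∀ u, ¬ D v u), (G.degree v - 1) := by
    have hmaps : ∀ v ∈ Finset.univ.filter (fun v : Fin n => ∀ u, ¬ D v u),
        G.degree v ∈ Finset.range (n + 1) := by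
      intro v _
      have := G.degree_lt_card_verts v
      rw [Fintype.card_fin] at this
      exact Finset.mem_range.2 (by omega)
    rw [← Finset.sum_fiberwise_of_maps_to hmaps]
    refine Finset.sum_congr rfl fun i _ => ?_
    have hset : {v : Fin n | (∀ u, ¬ D v u) ∧ G.degree v = i}
        = ((Finset.univ.filter (fun v : Fin n => ∀ u, ¬ D v u)).filter
            (fun v => G.degree v = i) : Finset (Fin n)) := by
      ext v; simp
    rw [hset, Set.ncard_coe_finset, Finset.sum_congr rfl (g := fun _ => i - 1)]
    · simp [mul_comm]
    · intro v hv
      rw [(Finset.mem_filter.1 hv).2]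
  -- a sink has indegree equal to its degree
  have h2 : ∑ v ∈ Finset.univ.filter (fun v : Fin n => ∀ u, ¬ D v u), (G.degree v - 1)
      ≤ ∑ v, (indeg v - 1) := by
    refine le_trans (Finset.sum_le_sum (g := fun v => indeg v - 1) ?_)
      (Finset.sum_le_sum_of_subset (Finset.subset_univ _))
    intro v hv
    have hs := (Finset.mem_filter.1 hv).2
    apply Nat.sub_le_sub_right
    rw [← SimpleGraph.card_neighborFinset_eq_degree]
    apply Finset.card_le_card
    intro u hu
    rw [SimpleGraph.mem_neighborFinset] at hu
    simp only [Finset.mem_filter, Finset.mem_univ, true_and]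
    exact (hO2 u v hu.symm).2 (hs u)
  have h3 : ∑ v, (indeg v - 1) + n ≤ ∑ v, indeg v + 1 := by
    have hle : ∑ v, ((indeg v - 1) + 1) ≤ ∑ v, (indeg v + if v = r then 1 else 0) := by
      refine Finset.sum_le_sum fun v _ => ?_
      by_cases hv : v = r
      · simp only [hv, if_true]; omega
      · have : 0 < indeg v := by
          apply Finset.card_pos.2
          by_contra hne
          apply hv
          apply hroot.2
          intro u hu
          exact hne ⟨u, by simpa using hu⟩
        simp only [hv, if_false]; omega
    simpa [Finset.sum_add_distrib] using hle
  have h4 : ∑ v, indeg v ≤ G.edgeFinset.card := by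
    rw [← Finset.card_sigma]
    refine Finset.card_le_card_of_injOn (fun p => s(p.2, p.1)) ?_ ?_
    · rintro ⟨v, u⟩ hp
      simp at hp
      simpa using hO1 _ _ hp
    · rintro ⟨v, u⟩ hp ⟨v', u'⟩ hp' h
      simp at hp hp' h
      rcases h with ⟨rfl, rfl⟩ | ⟨rfl, rfl⟩
      · rfl
      · exact absurd hp' ((hO2 _ _ (hO1 _ _ hp)).1 hp)
  have h5 : G.edgeFinset.card ≤ n + (chordSet n G).ncard := by
    have hsub : G.edgeFinset ⊆ (Finset.univ.image fun u : Fin n => s(u, u + 1)) ∪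
        (chordSet n G).toFinite.toFinset := by
      intro p hp
      rw [SimpleGraph.mem_edgeFinset] at hp
      by_cases hc : IsCycEdge n p
      · obtain ⟨u, rfl⟩ := hc
        exact Finset.mem_union_left _ (Finset.mem_image_of_mem _ (Finset.mem_univ u))
      · exact Finset.mem_union_right _ ((Set.Finite.mem_toFinset _).2 ⟨hp, hc⟩)
    refine (Finset.card_le_card hsub).trans ((Finset.card_union_le _ _).trans ?_)
    refine Nat.add_le_add (Finset.card_image_le.trans (by simp)) ?_
    rw [Set.ncard_eq_toFinset_card _ (chordSet n G).toFinite]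
  rw [h1]
  omega
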